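/- Let X be a two-dimensional polyhedral real Banach space. Then the following are equivalent: (a) property (P1) holds for X, i.e., whenever the segment [x,y] is contained in S_X and x ⊥_B y, both x and y are extreme points of the closed unit ball of X; (b) every x ∈ S_X has the local property (P); (c) the Birkhoff-James orthogonality is C-approximately symmetric in X, i.e., there exists ε ∈ [0,1) such that for all x, y ∈ X, x ⊥_B y implies y ⊥_B^ε x. -/

import Mathlib

open Set Metric

section Defs

variable {E : Type*} [NormedAddCommGroup E] [NormedSpace ℝ E]

/-- Birkhoff-James orthogonality: `x ⊥_B y` iff `‖x + t • y‖ ≥ ‖x‖` for all real `t`. -/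
def BJOrth (x y : E) : Prop := ∀ t : ℝ, ‖x‖ ≤ ‖x + t • y‖

/-- Dragomir-type approximate orthogonality: `x ⊥_D^ε y` iff
`‖x + t • y‖ ≥ √(1 - ε²) ‖x‖` for all real `t`. -/
def DOrth (ε : ℝ) (x y : E) : Prop :=
  ∀ t : ℝ, Real.sqrt (1 - ε ^ 2) * ‖x‖ ≤ ‖x + t • y‖

/-- Chmieliński-type approximate orthogonality: `x ⊥_B^ε y` iff
`‖x + t • y‖² ≥ ‖x‖² - 2 ε ‖x‖ ‖t • y‖` for all real `t`. -/
def BOrth (ε : ℝ) (x y : E) : Prop :=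
  ∀ t : ℝ, ‖x‖ ^ 2 - 2 * ε * ‖x‖ * ‖t • y‖ ≤ ‖x + t • y‖ ^ 2

/-- The set of supporting functionals at `x`. -/
def SuppJ (x : E) : Set (E →L[ℝ] ℝ) := {f | ‖f‖ = 1 ∧ f x = ‖x‖}

/-- The local property (P) at `x`: there is no unit vector `y` with `x ⊥_B y` such that
every supporting functional of `y` (or its negative) supports `x`. -/
def LocalP (x : E) : Prop :=
  ¬ ∃ y : E, ‖y‖ = 1 ∧ BJOrth x y ∧ ∀ f ∈ SuppJ y, f ∈ SuppJ x ∨ -f ∈ SuppJ x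

end Defs

/-!
Everything is read off the sets `J(x)` of supporting functionals: `y ⊥_B^ε x` holds iff some
`f ∈ J(y)` has `|f x| ≤ ε ‖x‖`, the case `ε = 0` being James' characterisation of `⊥_B`. For unit
vectors, (P) at `x` thus says that `x ⊥_B y` yields some `f ∈ J(y)` with `|f x| < 1`, and (c) is the
version of this with a uniform bound `ε < 1`.

In a polyhedral space `J` takes finitely many values and `J(z) ⊆ J(x)` for `z` near `x`, so that
compactness of the sphere makes the bound in (P) uniform. If (P) fails at `x` because of `y`, then
up to sign `J(y) ⊆ J(x)`, so `[x, y]` lies in the sphere and can be prolonged beyond `y`, which is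
therefore not extreme, against (P1). Conversely, a non-extreme point of the unit circle of a
two-dimensional space has a single supporting functional, so that a failure of (P1) contradicts
either `x ⊥_B y` or (P).
-/

section Lemmas

open Filter Topology

variable {X : Type*} [NormedAddCommGroup X] [NormedSpace ℝ X] {ε : ℝ} {x y : X}
  {f g : X →L[ℝ] ℝ}

/-- Property (P1): the endpoints of a segment in the unit sphere are extreme points of the unit
ball as soon as one is Birkhoff-James orthogonal to the other. -/
def PropertyP1 (X : Type*) [NormedAddCommGroup X] [NormedSpace ℝ X] : Prop :=
  ∀ x y : X, segment ℝ x y ⊆ sphere (0 : X) 1 → BJOrth x y →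
    x ∈ extremePoints ℝ (closedBall (0 : X) 1) ∧ y ∈ extremePoints ℝ (closedBall (0 : X) 1)

/-- C-approximate symmetry of Birkhoff-James orthogonality: reversing `x ⊥_B y` costs an error
`ε < 1`, in the sense of Chmieliński, that does not depend on the two vectors. -/
def IsCApproxSymmetric (X : Type*) [NormedAddCommGroup X] [NormedSpace ℝ X] : Prop :=
  ∃ ε ∈ Ico (0 : ℝ) 1, ∀ x y : X, BJOrth x y → BOrth ε y x

/-! ### Supporting functionals -/

lemma abs_apply_le_of_mem_suppJ (hf : f ∈ SuppJ x) (z : X) : |f z| ≤ ‖z‖ := by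
  simpa using f.le_of_opNorm_le hf.1.le z

lemma apply_le_of_mem_suppJ (hf : f ∈ SuppJ x) (z : X) : f z ≤ ‖z‖ :=
  (le_abs_self _).trans (abs_apply_le_of_mem_suppJ hf z)

lemma mem_suppJ_of_norm_le_one (hx : x ≠ 0) (hf : ‖f‖ ≤ 1) (hfx : f x = ‖x‖) : f ∈ SuppJ x := by
  refine ⟨hf.antisymm (le_of_mul_le_mul_right ?_ (norm_pos_iff.2 hx)), hfx⟩
  simpa [hfx] using f.le_opNorm x

lemma suppJ_nonempty (hx : x ≠ 0) : (SuppJ x).Nonempty :=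
  let ⟨f, hf, hfx⟩ := exists_dual_vector'' ℝ x
  ⟨f, mem_suppJ_of_norm_le_one hx hf hfx⟩

lemma convex_suppJ (hx : x ≠ 0) : Convex ℝ (SuppJ x) := by
  rintro f hf g hg a b ha hb hab
  refine mem_suppJ_of_norm_le_one hx ?_ ?_
  · calc ‖a • f + b • g‖ ≤ ‖a • f‖ + ‖b • g‖ := norm_add_le _ _
      _ = 1 := by simp [norm_smul, hf.1, hg.1, abs_of_nonneg, ha, hb, hab]
  · simp [hf.2, hg.2, ← add_mul, hab]

lemma mem_suppJ_neg_iff : f ∈ SuppJ (-x) ↔ -f ∈ SuppJ x := by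
  simp [SuppJ]

lemma suppJ_normalize (hx : x ≠ 0) : SuppJ (NormedSpace.normalize x) = SuppJ x := by
  ext f
  have hx' : ‖x‖ ≠ 0 := norm_ne_zero_iff.2 hx
  simp only [SuppJ, mem_ofPred_eq, NormedSpace.norm_normalize hx]
  simp [NormedSpace.normalize, inv_mul_eq_one₀ hx', eq_comm]

/-- If two functionals in `J(y)` took the opposite values `‖x‖` and `-‖x‖` at `x`, then their
midpoint would vanish there. -/
lemma suppJ_subset_or_subset_neg (hx : x ≠ 0) (hy : y ≠ 0)
    (h : ∀ f ∈ SuppJ y, f ∈ SuppJ x ∨ -f ∈ SuppJ x) :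
    SuppJ y ⊆ SuppJ x ∨ SuppJ y ⊆ SuppJ (-x) := by
  by_contra! hcon
  obtain ⟨⟨f, hf, hfx⟩, g, hg, hgx⟩ := hcon.imp not_subset.1 not_subset.1
  have hf' : -f x = ‖x‖ := ((h f hf).resolve_left hfx).2
  have hg' : g x = ‖x‖ := ((h g hg).resolve_right (mem_suppJ_neg_iff.not.1 hgx)).2
  have hmid : midpoint ℝ f g x = 0 := by
    simp [midpoint_eq_smul_add, hg', ← hf']
  have := h _ ((convex_suppJ hy).midpoint_mem hf hg)
  rcases this with h' | h' <;> simpa [hmid, hx, eq_comm] using h'.2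

lemma segment_subset_unit_sphere_iff : segment ℝ x y ⊆ sphere (0 : X) 1 ↔
    ‖x‖ = 1 ∧ ‖y‖ = 1 ∧ (SuppJ x ∩ SuppJ y).Nonempty := by
  constructor
  · intro h
    have hx : ‖x‖ = 1 := by simpa using h (left_mem_segment ℝ x y)
    have hy : ‖y‖ = 1 := by simpa using h (right_mem_segment ℝ x y)
    have hm : ‖midpoint ℝ x y‖ = 1 := by simpa using h (midpoint_mem_segment x y)
    obtain ⟨f, hf⟩ := suppJ_nonempty (norm_ne_zero_iff.1 (hm ▸ one_ne_zero))
    have hsum : 2⁻¹ * f x + 2⁻¹ * f y = 1 := by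
      simpa [midpoint_eq_smul_add, hm, mul_add] using hf.2.trans hm
    have hfx := apply_le_of_mem_suppJ hf x
    have hfy := apply_le_of_mem_suppJ hf y
    exact ⟨hx, hy, f, ⟨hf.1, by linarith⟩, ⟨hf.1, by linarith⟩⟩
  · rintro ⟨hx, hy, f, hfx, hfy⟩ z hz
    have hfz : f z = 1 := by
      obtain ⟨a, b, -, -, hab, rfl⟩ := hz
      simp [hfx.2, hfy.2, hx, hy, hab]
    have hz1 : z ∈ closedBall (0 : X) 1 :=
      (convex_closedBall 0 1).segment_subset (by simp [hx]) (by simp [hy]) hz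
    exact mem_sphere_zero_iff_norm.2
      ((mem_closedBall_zero_iff.1 hz1).antisymm (hfz ▸ apply_le_of_mem_suppJ hfx z))

/-! ### Orthogonality through supporting functionals -/

/-- By convexity of the norm along the line `x + ℝ y`, only the first-order term of the quadratic
condition at `t = 0` matters. -/
lemma bOrth_iff_sub_le_norm_add (hε : 0 ≤ ε) :
    BOrth ε x y ↔ ∀ t : ℝ, ‖x‖ - ε * ‖t • y‖ ≤ ‖x + t • y‖ := by
  refine ⟨fun h t => ?_, fun h t => ?_⟩
  · by_contra! hlt
    set d := ‖x‖ - ‖x + t • y‖ with hd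
    have hm : 0 ≤ ε * ‖t • y‖ := by positivity
    have hd0 : 0 < d := by linarith
    have hdx : d ≤ ‖x‖ := by linarith [norm_nonneg (x + t • y)]
    obtain ⟨l, hl0, hl1, hld⟩ : ∃ l : ℝ, 0 < l ∧ l ≤ 1 ∧ l * d = d - ε * ‖t • y‖ :=
      ⟨(d - ε * ‖t • y‖) / d, div_pos (by linarith) hd0, (div_le_one hd0).2 (by linarith),
        div_mul_cancel₀ _ hd0.ne'⟩
    have hconv : ‖x + (l * t) • y‖ ≤ ‖x‖ - l * d :=
      calc ‖x + (l * t) • y‖ = ‖(1 - l) • x + l • (x + t • y)‖ := by congr 1; module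
        _ ≤ (1 - l) * ‖x‖ + l * ‖x + t • y‖ := by
          refine (norm_add_le _ _).trans_eq ?_
          rw [norm_smul, norm_smul l, Real.norm_of_nonneg hl0.le,
            Real.norm_of_nonneg (sub_nonneg.2 hl1)]
        _ = ‖x‖ - l * d := by rw [hd]; ring
    have hsq := (h (l * t)).trans (pow_le_pow_left₀ (norm_nonneg _) hconv 2)
    rw [mul_smul, norm_smul l, Real.norm_of_nonneg hl0.le] at hsq
    have hle : 2 * (l * ‖x‖) * (l * d) ≤ l * ‖x‖ * (l * d) := by
      nlinarith [mul_le_mul_of_nonneg_left hdx (by positivity : 0 ≤ l * (l * d))]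
    have : 0 < l * ‖x‖ * (l * d) := by have := hd0.trans_le hdx; positivity
    linarith
  · have hm : 0 ≤ ε * ‖t • y‖ := by positivity
    rcases le_total (ε * ‖t • y‖) ‖x‖ with hle | hle
    · nlinarith [pow_le_pow_left₀ (sub_nonneg.2 hle) (h t) 2, sq_nonneg (ε * ‖t • y‖)]
    · nlinarith [mul_le_mul_of_nonneg_left hle (norm_nonneg x), sq_nonneg ‖x + t • y‖,
        mul_nonneg (norm_nonneg x) hm]

lemma bjOrth_iff_bOrth_zero : BJOrth x y ↔ BOrth 0 x y := by
  simp [BJOrth, bOrth_iff_sub_le_norm_add]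

lemma mem_iUnion_ball_smul_iff {r : ℝ} {z : X} :
    z ∈ ⋃ s : ℝ, ball (s • y) (r - ε * ‖s • y‖) ↔
      ∃ s : ℝ, ‖z - s • y‖ + ε * ‖s • y‖ < r := by
  simp [dist_eq_norm, lt_sub_iff_add_lt]

lemma convex_iUnion_ball_smul (hε : 0 ≤ ε) (r : ℝ) (y : X) :
    Convex ℝ (⋃ s : ℝ, ball (s • y) (r - ε * ‖s • y‖)) := by
  refine convex_iff_forall_pos.2 fun u hu v hv a b ha hb hab => ?_
  obtain ⟨s, hs⟩ := mem_iUnion_ball_smul_iff.1 hu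
  obtain ⟨t, ht⟩ := mem_iUnion_ball_smul_iff.1 hv
  refine mem_iUnion_ball_smul_iff.2 ⟨a * s + b * t, ?_⟩
  have norm_combo_le (p q : X) : ‖a • p + b • q‖ ≤ a * ‖p‖ + b * ‖q‖ := by
    simpa only [norm_smul, Real.norm_of_nonneg ha.le, Real.norm_of_nonneg hb.le] using
      norm_add_le (a • p) (b • q)
  calc ‖a • u + b • v - (a * s + b * t) • y‖ + ε * ‖(a * s + b * t) • y‖
      = ‖a • (u - s • y) + b • (v - t • y)‖ + ε * ‖a • s • y + b • t • y‖ := by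
        congr 2 <;> [skip; congr 1] <;> module
    _ ≤ (a * ‖u - s • y‖ + b * ‖v - t • y‖) + ε * (a * ‖s • y‖ + b * ‖t • y‖) := by
        gcongr <;> exact norm_combo_le _ _
    _ = a * (‖u - s • y‖ + ε * ‖s • y‖) + b * (‖v - t • y‖ + ε * ‖t • y‖) := by ring
    _ < a * r + b * r := by gcongr
    _ = r := by rw [← add_mul, hab, one_mul]

/-- Hahn–Banach for the largest seminorm dominated by the norm and by `ε * ‖y‖` at `y`: the union
of balls is its open ball of radius `‖x‖`. -/
lemma BOrth.exists_mem_suppJ (hε : 0 ≤ ε) (hx : x ≠ 0) (h : BOrth ε x y) :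
    ∃ f ∈ SuppJ x, |f y| ≤ ε * ‖y‖ := by
  let U : Set X := ⋃ s : ℝ, ball (s • y) (‖x‖ - ε * ‖s • y‖)
  have hU0 : (0 : X) ∈ U := mem_iUnion_ball_smul_iff.2 ⟨0, by simpa⟩
  have hUx : x ∉ U := fun hxU => by
    obtain ⟨s, hs⟩ := mem_iUnion_ball_smul_iff.1 hxU
    have := (bOrth_iff_sub_le_norm_add hε).1 h (-s)
    rw [neg_smul, norm_neg, ← sub_eq_add_neg] at this
    linarith
  obtain ⟨f, hfx, hfU⟩ := separate_convex_open_set hU0 (convex_iUnion_ball_smul hε _ _)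
    (isOpen_iUnion fun _ => isOpen_ball) hUx
  have hbound (z : X) (s : ℝ) : |‖x‖ * f (z + s • y)| ≤ ‖z‖ + ε * ‖s • y‖ := by
    by_contra! hlt
    set c := ‖x‖ * f (z + s • y) with hc
    have hc0 : 0 < |c| := hlt.trans_le' (by positivity)
    have hmem : (‖x‖ / c) • (z + s • y) ∈ U := by
      refine mem_iUnion_ball_smul_iff.2 ⟨‖x‖ / c * s, ?_⟩
      calc ‖(‖x‖ / c) • (z + s • y) - (‖x‖ / c * s) • y‖ + ε * ‖(‖x‖ / c * s) • y‖
          = ‖(‖x‖ / c) • z‖ + ε * ‖(‖x‖ / c) • s • y‖ := by congr 2 <;> [skip; congr 1] <;> module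
        _ = ‖x‖ * ((‖z‖ + ε * ‖s • y‖) / |c|) := by
          rw [norm_smul _ z, norm_smul _ (s • y), norm_div, norm_norm, Real.norm_eq_abs]
          ring
        _ < ‖x‖ * 1 := by
          gcongr
          exact (div_lt_one hc0).2 hlt
        _ = ‖x‖ := mul_one _
    refine (hfU _ hmem).ne ?_
    rw [map_smul, smul_eq_mul, div_mul_eq_mul_div, ← hc, div_self (abs_pos.1 hc0)]
  refine ⟨‖x‖ • f, mem_suppJ_of_norm_le_one hx ?_ (by simp [hfx]), ?_⟩
  · exact ContinuousLinearMap.opNorm_le_bound _ zero_le_one fun z => by simpa using hbound z 0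
  · simpa using hbound 0 1

lemma bOrth_iff_exists_mem_suppJ (hε : 0 ≤ ε) (hx : x ≠ 0) :
    BOrth ε x y ↔ ∃ f ∈ SuppJ x, |f y| ≤ ε * ‖y‖ := by
  refine ⟨fun h => h.exists_mem_suppJ hε hx, ?_⟩
  rintro ⟨f, hf, hfy⟩
  refine (bOrth_iff_sub_le_norm_add hε).2 fun t => ?_
  have hty : |f (t • y)| ≤ ε * ‖t • y‖ := by
    rw [map_smul, smul_eq_mul, abs_mul, norm_smul, Real.norm_eq_abs, mul_left_comm]
    gcongr
  calc ‖x‖ - ε * ‖t • y‖ ≤ ‖x‖ + f (t • y) := by linarith [neg_abs_le (f (t • y))]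
    _ = f (x + t • y) := by rw [map_add, hf.2]
    _ ≤ ‖x + t • y‖ := apply_le_of_mem_suppJ hf _

lemma bjOrth_iff_exists_mem_suppJ (hx : x ≠ 0) : BJOrth x y ↔ ∃ f ∈ SuppJ x, f y = 0 := by
  simp [bjOrth_iff_bOrth_zero, bOrth_iff_exists_mem_suppJ le_rfl hx]

lemma BJOrth.of_suppJ_subset {x' : X} (h : BJOrth x y) (hx : x ≠ 0) (hx' : x' ≠ 0)
    (hsub : SuppJ x ⊆ SuppJ x') : BJOrth x' y :=
  let ⟨f, hf, hfy⟩ := (bjOrth_iff_exists_mem_suppJ hx).1 h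
  (bjOrth_iff_exists_mem_suppJ hx').2 ⟨f, hsub hf, hfy⟩

lemma BJOrth.neg_left (h : BJOrth x y) : BJOrth (-x) y := fun t => by
  have e : -x + t • y = -(x + -t • y) := by module
  rw [e, norm_neg, norm_neg]
  exact h (-t)

lemma not_bjOrth_self (hx : x ≠ 0) : ¬ BJOrth x x := fun h => by
  simpa [hx] using h (-1)

lemma mem_suppJ_or_neg_mem_iff (hx : ‖x‖ = 1) (hf : ‖f‖ = 1) :
    f ∈ SuppJ x ∨ -f ∈ SuppJ x ↔ 1 ≤ |f x| := by
  have hle : |f x| ≤ 1 := by simpa [hx] using f.le_of_opNorm_le hf.le x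
  rw [hle.ge_iff_eq, abs_eq zero_le_one]
  simp [SuppJ, hf, hx, neg_eq_iff_eq_neg]

lemma localP_iff (hx : ‖x‖ = 1) :
    LocalP x ↔ ∀ y : X, ‖y‖ = 1 → BJOrth x y → ∃ f ∈ SuppJ y, |f x| < 1 := by
  unfold LocalP
  push Not
  refine forall₃_congr fun y _ _ => exists_congr fun f => and_congr_right fun hf => ?_
  rw [← not_or, mem_suppJ_or_neg_mem_iff hx hf.1, not_le]

lemma BJOrth.normalize (h : BJOrth x y) (hx : x ≠ 0) :
    BJOrth (NormedSpace.normalize x) (NormedSpace.normalize y) := by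
  obtain ⟨f, hf, hfy⟩ := (bjOrth_iff_exists_mem_suppJ hx).1 h
  refine (bjOrth_iff_exists_mem_suppJ (by simpa)).2 ⟨f, (suppJ_normalize hx).symm ▸ hf, ?_⟩
  simp [NormedSpace.normalize, hfy]

lemma isCApproxSymmetric_iff : IsCApproxSymmetric X ↔ ∃ ε ∈ Ico (0 : ℝ) 1, ∀ x y : X,
    ‖x‖ = 1 → ‖y‖ = 1 → BJOrth x y → ∃ f ∈ SuppJ y, |f x| ≤ ε := by
  refine exists_congr fun ε => and_congr_right fun hε =>
    ⟨fun H x y hx hy h => ?_, fun H x y h => ?_⟩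
  · have hy0 : y ≠ 0 := norm_ne_zero_iff.1 (hy ▸ one_ne_zero)
    simpa [hx] using (bOrth_iff_exists_mem_suppJ hε.1 hy0).1 (H x y h)
  · rcases eq_or_ne x 0 with rfl | hx
    · simp [BOrth]
    rcases eq_or_ne y 0 with rfl | hy
    · simp [BOrth]
    obtain ⟨f, hf, hfx⟩ := H _ _ (NormedSpace.norm_normalize hx) (NormedSpace.norm_normalize hy)
      (h.normalize hx)
    refine (bOrth_iff_exists_mem_suppJ hε.1 hy).2 ⟨f, suppJ_normalize hy ▸ hf, ?_⟩
    calc |f x| = ‖x‖ * |f (NormedSpace.normalize x)| := by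
          rw [← abs_norm, ← abs_mul, ← smul_eq_mul, ← map_smul, NormedSpace.norm_smul_normalize]
      _ ≤ ε * ‖x‖ := by rw [mul_comm]; gcongr

lemma IsCApproxSymmetric.localP (H : IsCApproxSymmetric X) (hx : ‖x‖ = 1) : LocalP x := by
  obtain ⟨ε, hε, H⟩ := isCApproxSymmetric_iff.1 H
  refine (localP_iff hx).2 fun y hy hxy => ?_
  obtain ⟨f, hf, hfx⟩ := H x y hx hy hxy
  exact ⟨f, hf, hfx.trans_lt hε.2⟩

/-! ### Faces of the unit ball -/

lemma mem_toExposed_closedBall_iff (hx : ‖x‖ = 1) (hf : f ∈ SuppJ x) {z : X} :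
    z ∈ f.toExposed (closedBall (0 : X) 1) ↔ ‖z‖ ≤ 1 ∧ f z = 1 := by
  simp only [ContinuousLinearMap.toExposed, mem_ofPred_eq, mem_closedBall_zero_iff]
  refine and_congr_right fun hz => ⟨fun h => ?_, fun h w hw => ?_⟩
  · exact ((apply_le_of_mem_suppJ hf z).trans hz).antisymm (by simpa [hf.2, hx] using h x hx.le)
  · exact h ▸ (apply_le_of_mem_suppJ hf w).trans hw

lemma apply_eq_one_of_mem_openSegment {u v : X} (hu : ‖u‖ ≤ 1) (hv : ‖v‖ ≤ 1) (hx : ‖x‖ = 1)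
    (hxuv : x ∈ openSegment ℝ u v) (hf : f ∈ SuppJ x) : f u = 1 ∧ f v = 1 := by
  have hext := (ContinuousLinearMap.toExposed.isExposed (l := f)
    (A := closedBall (0 : X) 1)).isExtreme
  have hxF := (mem_toExposed_closedBall_iff hx hf).2 ⟨hx.le, hf.2.trans hx⟩
  have hu' := mem_closedBall_zero_iff.2 hu
  have hv' := mem_closedBall_zero_iff.2 hv
  exact ⟨((mem_toExposed_closedBall_iff hx hf).1
      (hext.left_mem_of_mem_openSegment hu' hv' hxF hxuv)).2,
    ((mem_toExposed_closedBall_iff hx hf).1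
      (hext.right_mem_of_mem_openSegment hu' hv' hxF hxuv)).2⟩

lemma linearIndependent_pair_of_apply_eq_one {u v : X} (hu : f u = 1) (hv : f v = 1)
    (huv : u ≠ v) : LinearIndependent ℝ ![u, v] := by
  refine LinearIndependent.pair_iff.2 fun s t h => ?_
  have hst : s + t = 0 := by simpa [hu, hv] using congrArg f h
  obtain rfl : t = -s := by linarith
  have hs : s • (u - v) = 0 := by rw [← h]; module
  simpa [sub_ne_zero.2 huv] using hs

/-- All functionals in `J(x)` take the value `1` at the ends of a segment of the ball through `x`,
and these ends form a basis. -/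
lemma subsingleton_suppJ_of_notMem_extremePoints (hdim : Module.finrank ℝ X = 2) (hx : ‖x‖ = 1)
    (hne : x ∉ extremePoints ℝ (closedBall (0 : X) 1)) : (SuppJ x).Subsingleton := by
  have hx1 : x ∈ closedBall (0 : X) 1 := mem_closedBall_zero_iff.2 hx.le
  simp only [extremePoints, mem_ofPred_eq, hx1, true_and] at hne
  push Not at hne
  obtain ⟨u, hu, v, hv, hxuv, hux⟩ := hne
  rw [mem_closedBall_zero_iff] at hu hv
  have huv : u ≠ v := by
    rintro rfl
    rw [openSegment_same] at hxuv
    exact hux hxuv.symm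
  have : FiniteDimensional ℝ X := Module.finite_of_finrank_pos (by simp [hdim])
  intro f hf g hg
  obtain ⟨hfu, hfv⟩ := apply_eq_one_of_mem_openSegment hu hv hx hxuv hf
  obtain ⟨hgu, hgv⟩ := apply_eq_one_of_mem_openSegment hu hv hx hxuv hg
  have hspan : Submodule.span ℝ (range ![u, v]) = ⊤ :=
    (linearIndependent_pair_of_apply_eq_one hfu hfv huv).span_eq_top_of_card_eq_finrank'
      (by simp [hdim])
  have hfg : EqOn f g (range ![u, v]) := by simp [EqOn, hfu, hfv, hgu, hgv]
  exact ContinuousLinearMap.coe_injective (LinearMap.ext_on hspan hfg)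

lemma propertyP1_of_forall_localP (hdim : Module.finrank ℝ X = 2)
    (H : ∀ x : X, ‖x‖ = 1 → LocalP x) : PropertyP1 X := by
  intro x y hseg hxy
  obtain ⟨hx, hy, f, hfx, hfy⟩ := segment_subset_unit_sphere_iff.1 hseg
  constructor <;> by_contra hne
  · have hx0 : x ≠ 0 := norm_ne_zero_iff.1 (hx ▸ one_ne_zero)
    obtain ⟨g, hg, hgy⟩ := (bjOrth_iff_exists_mem_suppJ hx0).1 hxy
    obtain rfl := subsingleton_suppJ_of_notMem_extremePoints hdim hx hne hfx hg
    simp [hfy.2, hy] at hgy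
  · obtain ⟨g, hg, hgx⟩ := (localP_iff hx).1 (H x hx) y hy hxy
    obtain rfl := subsingleton_suppJ_of_notMem_extremePoints hdim hy hne hfy hg
    simp [hfx.2, hx] at hgx

/-! ### Polyhedral balls -/

section Polyhedral

variable [FiniteDimensional ℝ X]

/-- Krein–Milman in the face of the unit ball exposed by `f`. -/
lemma mem_convexHull_of_mem_suppJ
    (hpoly : (extremePoints ℝ (closedBall (0 : X) 1)).Finite) (hx : ‖x‖ = 1) (hf : f ∈ SuppJ x) :
    x ∈ convexHull ℝ {e ∈ extremePoints ℝ (closedBall (0 : X) 1) | f e = 1} := by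
  have : ProperSpace X := FiniteDimensional.proper ℝ X
  set F := f.toExposed (closedBall (0 : X) 1)
  have hexp : IsExposed ℝ (closedBall (0 : X) 1) F := ContinuousLinearMap.toExposed.isExposed
  have hext : extremePoints ℝ F ⊆ {e ∈ extremePoints ℝ (closedBall (0 : X) 1) | f e = 1} :=
    fun e he => ⟨hexp.isExtreme.extremePoints_subset_extremePoints he,
      ((mem_toExposed_closedBall_iff hx hf).1 he.1).2⟩
  have hxF : x ∈ F := (mem_toExposed_closedBall_iff hx hf).2 ⟨hx.le, hf.2.trans hx⟩
  rw [← closure_convexHull_extremePoints (hexp.isCompact (isCompact_closedBall _ _))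
    (hexp.convex (convex_closedBall _ _))] at hxF
  exact closure_minimal (convexHull_mono hext)
    ((hpoly.subset (sep_subset _ _)).isClosed_convexHull ℝ) hxF

/-- Hence `J(x)` is determined by the sets of extreme points whose convex hull contains the
direction of `x`. -/
lemma mem_suppJ_iff_normalize_mem_convexHull
    (hpoly : (extremePoints ℝ (closedBall (0 : X) 1)).Finite) (hx : x ≠ 0) :
    f ∈ SuppJ x ↔ ‖f‖ = 1 ∧ NormedSpace.normalize x ∈
      convexHull ℝ {e ∈ extremePoints ℝ (closedBall (0 : X) 1) | f e = 1} := by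
  have hnorm := NormedSpace.norm_normalize hx
  rw [← suppJ_normalize hx]
  refine ⟨fun hf => ⟨hf.1, mem_convexHull_of_mem_suppJ hpoly hnorm hf⟩, fun ⟨hf, hmem⟩ => ⟨hf, ?_⟩⟩
  rw [hnorm]
  exact convexHull_min (fun e he => he.2) (convex_hyperplane f.toLinearMap.isLinear 1) hmem

lemma finite_suppJ_image (hpoly : (extremePoints ℝ (closedBall (0 : X) 1)).Finite) :
    (SuppJ '' {x : X | x ≠ 0}).Finite := by
  let E := extremePoints ℝ (closedBall (0 : X) 1)
  let Φ : Set (Set X) → Set (X →L[ℝ] ℝ) := fun 𝒜 => {f | ‖f‖ = 1 ∧ {e ∈ E | f e = 1} ∈ 𝒜}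
  refine (hpoly.finite_subsets.finite_subsets.image Φ).subset ?_
  rintro _ ⟨x, hx, rfl⟩
  refine ⟨{A | A ⊆ E ∧ NormedSpace.normalize x ∈ convexHull ℝ A}, fun A hA => hA.1, ?_⟩
  ext f
  simp [Φ, E, mem_suppJ_iff_normalize_mem_convexHull hpoly hx]

/-- Convex hulls of sets of extreme points are finite in number and closed, so those missing the
direction of `x` also miss nearby directions. -/
lemma eventually_suppJ_subset (hpoly : (extremePoints ℝ (closedBall (0 : X) 1)).Finite)
    (hx : x ≠ 0) : ∀ᶠ z in 𝓝 x, SuppJ z ⊆ SuppJ x := by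
  have hcont : ContinuousAt NormedSpace.normalize x :=
    (continuousAt_id.norm.inv₀ (norm_ne_zero_iff.2 hx)).smul continuousAt_id
  have hhull : ∀ᶠ z in 𝓝 x, ∀ A ∈ {A | A ⊆ extremePoints ℝ (closedBall (0 : X) 1)},
      NormedSpace.normalize z ∈ convexHull ℝ A → NormedSpace.normalize x ∈ convexHull ℝ A := by
    refine (eventually_all_finite hpoly.finite_subsets).2 fun A hA => ?_
    by_cases hxA : NormedSpace.normalize x ∈ convexHull ℝ A
    · exact .of_forall fun _ _ => hxA
    · have hclosed := (hpoly.subset hA).isClosed_convexHull ℝ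
      exact (hcont.eventually_mem (hclosed.isOpen_compl.mem_nhds hxA)).mono fun z hz hzA =>
        absurd hzA hz
  filter_upwards [hhull, eventually_ne_nhds hx] with z hz hz0 f hf
  rw [mem_suppJ_iff_normalize_mem_convexHull hpoly hz0] at hf
  exact (mem_suppJ_iff_normalize_mem_convexHull hpoly hx).2 ⟨hf.1, hz _ (sep_subset _ _) hf.2⟩

/-- Moving from `y` slightly away from `x` stays on the unit sphere, since a functional supporting
the new point supports `y`, hence `x`. So `y` is interior to a segment issuing from `x`. -/
lemma eq_of_mem_extremePoints_of_suppJ_subset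
    (hpoly : (extremePoints ℝ (closedBall (0 : X) 1)).Finite) (hx : ‖x‖ = 1) (hy : ‖y‖ = 1)
    (hyE : y ∈ extremePoints ℝ (closedBall (0 : X) 1)) (hsub : SuppJ y ⊆ SuppJ x) : x = y := by
  have hy0 : y ≠ 0 := norm_ne_zero_iff.1 (hy ▸ one_ne_zero)
  have htend : Tendsto (fun t : ℝ => y + t • (y - x)) (𝓝[>] 0) (𝓝 y) :=
    ((by fun_prop : Continuous fun t : ℝ => y + t • (y - x)).tendsto' 0 y (by simp)).mono_left
      nhdsWithin_le_nhds
  have hpos : ∀ᶠ t : ℝ in 𝓝[>] 0, 0 < t := self_mem_nhdsWithin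
  obtain ⟨t, ht, hzy, hz0⟩ := (hpos.and (htend.eventually
    ((eventually_suppJ_subset hpoly hy0).and (eventually_ne_nhds hy0)))).exists
  obtain ⟨f, hf⟩ := suppJ_nonempty hz0
  have hnorm : ‖y + t • (y - x)‖ = 1 := by
    rw [← hf.2]
    simp [(hzy hf).2, (hsub (hzy hf)).2, hx, hy]
  refine hyE.2 (x₁ := x) (by simp [hx]) (x₂ := y + t • (y - x)) (by simp [hnorm]) ?_
  refine ⟨t / (1 + t), 1 / (1 + t), by positivity, by positivity, by field_simp; ring, ?_⟩
  match_scalars <;> field_simp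
  ring

lemma PropertyP1.localP (hpoly : (extremePoints ℝ (closedBall (0 : X) 1)).Finite)
    (H : PropertyP1 X) (hx : ‖x‖ = 1) : LocalP x := by
  rintro ⟨y, hy, hxy, hJ⟩
  have hy0 : y ≠ 0 := norm_ne_zero_iff.1 (hy ▸ one_ne_zero)
  have not_subset {z : X} (hz : ‖z‖ = 1) (hzy : BJOrth z y) : ¬ SuppJ y ⊆ SuppJ z := fun hsub => by
    obtain ⟨f, hf⟩ := suppJ_nonempty hy0
    have hyE := (H z y (segment_subset_unit_sphere_iff.2 ⟨hz, hy, f, hsub hf, hf⟩) hzy).2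
    obtain rfl := eq_of_mem_extremePoints_of_suppJ_subset hpoly hz hy hyE hsub
    exact not_bjOrth_self hy0 hzy
  rcases suppJ_subset_or_subset_neg (norm_ne_zero_iff.1 (hx ▸ one_ne_zero)) hy0 hJ with hsub | hsub
  · exact not_subset hx hxy hsub
  · exact not_subset (by rwa [norm_neg]) hxy.neg_left hsub

/-- Near `x` only the finitely many sets `J(y)` with `x ⊥_B y` matter, and each of them contains
a functional chosen by the local property at `x`. -/
lemma LocalP.eventually_exists_abs_apply_le
    (hpoly : (extremePoints ℝ (closedBall (0 : X) 1)).Finite) (hx : ‖x‖ = 1) (H : LocalP x) :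
    ∀ᶠ p : ℝ × X in 𝓝[<] 1 ×ˢ 𝓝 x, ∀ y : X, ‖y‖ = 1 → BJOrth p.2 y →
      ∃ f ∈ SuppJ y, |f p.2| ≤ p.1 := by
  have hx0 : x ≠ 0 := norm_ne_zero_iff.1 (hx ▸ one_ne_zero)
  have hfin : (SuppJ '' {y : X | ‖y‖ = 1 ∧ BJOrth x y}).Finite :=
    (finite_suppJ_image hpoly).subset <| image_mono fun y hy =>
      norm_ne_zero_iff.1 (hy.1 ▸ one_ne_zero)
  have hbound : ∀ᶠ p : ℝ × X in 𝓝[<] 1 ×ˢ 𝓝 x,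
      ∀ J ∈ SuppJ '' {y : X | ‖y‖ = 1 ∧ BJOrth x y}, ∃ f ∈ J, |f p.2| ≤ p.1 := by
    refine (eventually_all_finite hfin).2 ?_
    rintro _ ⟨y, ⟨hy, hxy⟩, rfl⟩
    obtain ⟨f, hf, hfx⟩ := (localP_iff hx).1 H y hy hxy
    have hlim : Tendsto (fun p : ℝ × X => |f p.2|) (𝓝[<] 1 ×ˢ 𝓝 x) (𝓝 |f x|) :=
      (f.continuous.abs.tendsto x).comp tendsto_snd
    have hone : Tendsto (Prod.fst : ℝ × X → ℝ) (𝓝[<] 1 ×ˢ 𝓝 x) (𝓝 1) :=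
      tendsto_fst.mono_right nhdsWithin_le_nhds
    filter_upwards [hlim.eventually_lt hone hfx] with p hp using ⟨f, hf, hp.le⟩
  filter_upwards [hbound, tendsto_snd.eventually ((eventually_suppJ_subset hpoly hx0).and
    (eventually_ne_nhds hx0))] with p hp ⟨hsub, hp0⟩ y hy hpy
  exact hp _ ⟨y, ⟨hy, hpy.of_suppJ_subset hp0 hx0 hsub⟩, rfl⟩

lemma isCApproxSymmetric_of_forall_localP
    (hpoly : (extremePoints ℝ (closedBall (0 : X) 1)).Finite)
    (H : ∀ x : X, ‖x‖ = 1 → LocalP x) : IsCApproxSymmetric X := by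
  have : ProperSpace X := FiniteDimensional.proper ℝ X
  have hunif : ∀ᶠ p : ℝ × X in 𝓝[<] 1 ×ˢ 𝓝ˢ (sphere 0 1), ∀ y : X, ‖y‖ = 1 → BJOrth p.2 y →
      ∃ f ∈ SuppJ y, |f p.2| ≤ p.1 :=
    (isCompact_sphere (0 : X) 1).mem_prod_nhdsSet_of_forall fun x hx =>
      (H x (by simpa using hx)).eventually_exists_abs_apply_le hpoly (by simpa using hx)
  obtain ⟨ε, hε, hεI⟩ :=
    (hunif.curry.mono fun _ h => h.self_of_nhdsSet).and (Ico_mem_nhdsLT one_pos) |>.exists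
  exact isCApproxSymmetric_iff.2 ⟨ε, hεI, fun x y hx => hε x (by simpa using hx) y⟩

end Polyhedral

end Lemmas

theorem stmt_19 {X : Type*} [NormedAddCommGroup X] [NormedSpace ℝ X]
    [FiniteDimensional ℝ X] (hdim : Module.finrank ℝ X = 2)
    (hpoly : (Set.extremePoints ℝ (Metric.closedBall (0 : X) 1)).Finite) :
    List.TFAE
      [ ∀ x y : X, segment ℝ x y ⊆ Metric.sphere (0 : X) 1 → BJOrth x y →
          x ∈ Set.extremePoints ℝ (Metric.closedBall (0 : X) 1) ∧
          y ∈ Set.extremePoints ℝ (Metric.closedBall (0 : X) 1),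
        ∀ x : X, ‖x‖ = 1 → LocalP x,
        ∃ ε ∈ Set.Ico (0 : ℝ) 1, ∀ x y : X, BJOrth x y → BOrth ε y x ] := by
  tfae_have 1 → 2 := fun H _ hx => PropertyP1.localP hpoly H hx
  tfae_have 2 → 1 := propertyP1_of_forall_localP hdim
  tfae_have 2 → 3 := isCApproxSymmetric_of_forall_localP hpoly
  tfae_have 3 → 2 := fun H _ hx => IsCApproxSymmetric.localP H hx
  tfae_finish
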